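/- Let k ≥ 2 and let αᵢ, βᵢ, γᵢ ∈ ℝ for i = 1, …, k. Define residᵢ(ε, σ) = αᵢε + βᵢσ − γᵢ, and for i = 1, …, k−1 define pᵢ = αᵢ − α_{i+1}, qᵢ = βᵢ − β_{i+1}, rᵢ = γᵢ − γ_{i+1}; set p₀ = q₀ = r₀ = p_k = q_k = r_k = 0. For τ ≥ 0, define C(τ) = ⋃_{i=1}^{k} { (ε, σ) ∈ ℝ² : p_{i−1}ε + q_{i−1}σ ≥ r_{i−1}, pᵢε + qᵢσ ≤ rᵢ, and |residᵢ(ε, σ)| ≤ τ }. Fix (ε, σ) ∈ ℝ² and let M ∈ ℝ satisfy M ≥ |pⱼε + qⱼσ − rⱼ| for all j = 0, …, k and M ≥ |residᵢ(ε, σ)| − τ for all i = 1, …, k. Then (ε, σ) ∈ C(τ) if and only if there exist s₁, …, s_{k−1} ∈ {0, 1} with s₁ ≥ … ≥ s_{k−1} such that for every i = 1, …, k, writing e_i(s) = (i − 1) − (s₁ + … + s_{i−1}) + (s_i + … + s_{k−1}): p_{i−1}ε + q_{i−1}σ ≥ r_{i−1} − M·e_i(s), pᵢε + qᵢσ ≤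 rᵢ + M·e_i(s), and |residᵢ(ε, σ)| ≤ τ + M·e_i(s). -/

import Mathlib

/-!
An ordered binary vector is a step `1, …, 1, 0, …, 0`, hence determined by a threshold
`m ∈ {1, …, k}`, the index of the selected piece. For that vector `e_i(s) = |i - m|`: the
constraints of piece `m` are imposed exactly, and those of every other piece are relaxed by at least
`M`, which makes them hold automatically.
-/

section OrderedBinary

open Finset

/-- The feasible vectors of selection variables: `s₁ ≥ … ≥ s_{k-1}` in `{0, 1}`. A vector is encoded
as a function on `ℕ` of which only the values at `1, …, k - 1` matter. -/
structure IsOrderedBinary {R : Type*} [Zero R] [One R] [LE R] (k : ℕ) (s : ℕ → R) : Prop where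
  eq_zero_or_eq_one : ∀ j ∈ Icc 1 (k - 1), s j = 0 ∨ s j = 1
  succ_le : ∀ j, 1 ≤ j → j + 1 ≤ k - 1 → s (j + 1) ≤ s j

/-- The ordered binary vector that selects piece `m`: ones before `m`, zeros from `m` on. -/
def thresholdVector (R : Type*) [Zero R] [One R] (m : ℕ) : ℕ → R :=
  fun j => if j < m then 1 else 0

/-- The coefficient `e_i(s)` of the big constant `M` in the constraints of piece `i`. -/
def bigMCoeff {R : Type*} [AddCommGroupWithOne R] (k i : ℕ) (s : ℕ → R) : R :=
  (i - 1 : R) - (∑ j ∈ Icc 1 (i - 1), s j) + ∑ j ∈ Icc i (k - 1), s j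

theorem bigMCoeff_congr {R : Type*} [AddCommGroupWithOne R] {k i : ℕ} {s t : ℕ → R}
    (hi : i ∈ Icc 1 k) (hst : Set.EqOn s t (Set.Icc 1 (k - 1))) :
    bigMCoeff k i s = bigMCoeff k i t := by
  obtain ⟨hi1, hik⟩ := mem_Icc.mp hi
  have hbefore : ∑ j ∈ Icc 1 (i - 1), s j = ∑ j ∈ Icc 1 (i - 1), t j :=
    sum_congr rfl fun j hj => hst (by grind)
  have hafter : ∑ j ∈ Icc i (k - 1), s j = ∑ j ∈ Icc i (k - 1), t j :=
    sum_congr rfl fun j hj => hst (by grind)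
  rw [bigMCoeff, bigMCoeff, hbefore, hafter]

theorem sum_Icc_thresholdVector {R : Type*} [NonAssocSemiring R] (a b m : ℕ) :
    ∑ j ∈ Icc a b, thresholdVector R m j = ((min m (b + 1) - a : ℕ) : R) := by
  have hfilter : {j ∈ Icc a b | j < m} = Ico a (min m (b + 1)) := by
    ext j
    grind
  simp only [thresholdVector, sum_boole, hfilter, Nat.card_Ico]

variable {R : Type*} [Ring R] [LinearOrder R] [IsStrictOrderedRing R]

theorem isOrderedBinary_thresholdVector (k m : ℕ) : IsOrderedBinary k (thresholdVector R m) where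
  eq_zero_or_eq_one j _ := (ite_eq_or_eq (j < m) 1 0).symm
  succ_le j _ _ := by
    unfold thresholdVector
    split_ifs
    · exact le_rfl
    · omega
    · exact zero_le_one
    · exact le_rfl

theorem IsOrderedBinary.exists_eqOn_thresholdVector {k : ℕ} {s : ℕ → R} (hk : 1 ≤ k)
    (hs : IsOrderedBinary k s) :
    ∃ m ∈ Icc 1 k, Set.EqOn s (thresholdVector R m) (Set.Icc 1 (k - 1)) := by
  induction k, hk using Nat.le_induction with
  | base => exact ⟨1, by simp, fun j hj => by grind⟩
  | succ k hk ih =>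
    have hs_init : IsOrderedBinary k s :=
      ⟨fun j hj => hs.eq_zero_or_eq_one j (by grind), fun j hj hjk => hs.succ_le j hj (by omega)⟩
    obtain ⟨m, hm, hsm⟩ := ih hs_init
    rcases hs.eq_zero_or_eq_one k (by grind) with hsk | hsk
    · exact ⟨m, by grind, fun j hj => by grind [thresholdVector, Set.EqOn]⟩
    · have hmk : m = k := by
        by_contra hne
        have hpred : s (k - 1) = 0 := by grind [thresholdVector, Set.EqOn]
        have hle := hs.succ_le (k - 1) (by grind) (by grind)
        rw [Nat.sub_add_cancel hk, hsk, hpred] at hle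
        exact zero_lt_one.not_ge hle
      exact ⟨k + 1, by simp, fun j hj => by grind [thresholdVector, Set.EqOn]⟩

theorem bigMCoeff_thresholdVector {k i m : ℕ} (hi : i ∈ Icc 1 k) (hm : m ∈ Icc 1 k) :
    bigMCoeff k i (thresholdVector R m) = |(i : R) - m| := by
  obtain ⟨hi1, hik⟩ := mem_Icc.mp hi
  obtain ⟨hm1, hmk⟩ := mem_Icc.mp hm
  have hk1 : 1 ≤ k := hi1.trans hik
  simp only [bigMCoeff, sum_Icc_thresholdVector, Nat.sub_add_cancel hi1, Nat.sub_add_cancel hk1,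
    min_eq_left hmk]
  rcases le_total i m with him | hmi
  · rw [min_eq_right him, Nat.cast_sub hi1, Nat.cast_sub him, abs_sub_comm,
      abs_of_nonneg (sub_nonneg.mpr (Nat.cast_le.mpr him)), Nat.cast_one, sub_self, zero_add]
  · rw [min_eq_left hmi, Nat.sub_eq_zero_of_le hmi, Nat.cast_sub hm1,
      abs_of_nonneg (sub_nonneg.mpr (Nat.cast_le.mpr hmi)), Nat.cast_one, Nat.cast_zero, add_zero,
      sub_sub_sub_cancel_right]

theorem one_le_abs_natCast_sub_natCast {i m : ℕ} (h : i ≠ m) : 1 ≤ |(i : R) - m| := by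
  have hint : 1 ≤ |(i : ℤ) - m| := Int.one_le_abs (sub_ne_zero.mpr (Nat.cast_injective.ne h))
  exact_mod_cast (Int.cast_le (R := R)).mpr hint

/-- `P i t` stands for the constraints of piece `i` relaxed by the slack `t`. -/
theorem bigM_general_pieces_general {k : ℕ} (hk : 1 ≤ k) {P : ℕ → R → Prop}
    (hP : ∀ i, Monotone (P i)) {M : R} (hM : 0 ≤ M) (hPM : ∀ i ∈ Icc 1 k, P i M) :
    (∃ i ∈ Icc 1 k, P i 0) ↔
      ∃ s : ℕ → R, IsOrderedBinary k s ∧ ∀ i ∈ Icc 1 k, P i (M * bigMCoeff k i s) := by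
  constructor
  · rintro ⟨m, hm, hPm⟩
    refine ⟨thresholdVector R m, isOrderedBinary_thresholdVector k m, fun i hi => ?_⟩
    rw [bigMCoeff_thresholdVector hi hm]
    rcases eq_or_ne i m with rfl | him
    · rwa [sub_self, abs_zero, mul_zero]
    · exact hP i (le_mul_of_one_le_right hM (one_le_abs_natCast_sub_natCast him)) (hPM i hi)
  · rintro ⟨s, hs, hPs⟩
    obtain ⟨m, hm, hsm⟩ := hs.exists_eqOn_thresholdVector hk
    have hPm := hPs m hm
    rw [bigMCoeff_congr hm hsm, bigMCoeff_thresholdVector hm hm, sub_self, abs_zero,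
      mul_zero] at hPm
    exact ⟨m, hm, hPm⟩

end OrderedBinary

section RelaxedPiece

/-- The point `(ε, σ)` satisfies the three inequalities defining piece `i` of `C(τ)`, each relaxed
by the slack `t`. -/
def RelaxedPiece {R : Type*} [Ring R] [LinearOrder R] (α β γ p q r : ℕ → R) (τ ε σ : R)
    (i : ℕ) (t : R) : Prop :=
  p (i - 1) * ε + q (i - 1) * σ ≥ r (i - 1) - t ∧
  p i * ε + q i * σ ≤ r i + t ∧
  |α i * ε + β i * σ - γ i| ≤ τ + t

variable {R : Type*} [Ring R] [LinearOrder R] {α β γ p q r : ℕ → R} {τ ε σ : R} {i : ℕ}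

theorem relaxedPiece_zero_iff :
    RelaxedPiece α β γ p q r τ ε σ i 0 ↔
      p (i - 1) * ε + q (i - 1) * σ ≥ r (i - 1) ∧
      p i * ε + q i * σ ≤ r i ∧
      |α i * ε + β i * σ - γ i| ≤ τ := by
  simp only [RelaxedPiece, sub_zero, add_zero]

variable [IsOrderedRing R]

theorem monotone_relaxedPiece : Monotone (RelaxedPiece α β γ p q r τ ε σ i) :=
  fun _ _ htu ⟨hlower, hupper, hresid⟩ =>
    ⟨(sub_le_sub_left htu _).trans hlower, hupper.trans (add_le_add_right htu _),
      hresid.trans (add_le_add_right htu _)⟩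

theorem relaxedPiece_of_abs_le {M : R}
    (hlower : |p (i - 1) * ε + q (i - 1) * σ - r (i - 1)| ≤ M)
    (hupper : |p i * ε + q i * σ - r i| ≤ M) (hresid : |α i * ε + β i * σ - γ i| - τ ≤ M) :
    RelaxedPiece α β γ p q r τ ε σ i M :=
  ⟨sub_le_comm.mp (abs_sub_le_iff.mp hlower).2, sub_le_iff_le_add'.mp (abs_sub_le_iff.mp hupper).1,
    sub_le_iff_le_add'.mp hresid⟩

end RelaxedPiece

open Finset in
/-- Big-M mixed-integer reformulation of membership in the piecewise
uncertainty set `C(τ)` with `k` pieces: `(ε, σ) ∈ C(τ)` iff there exist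
ordered binary variables `s₁ ≥ … ≥ s_{k-1}` satisfying, for every piece `i`,
the three big-M inequalities with coefficient
`e_i(s) = (i-1) - (s₁ + … + s_{i-1}) + (s_i + … + s_{k-1})`. -/
theorem bigM_general_pieces
    (k : ℕ) (hk : 2 ≤ k) (α β γ : ℕ → ℝ)
    (p q r : ℕ → ℝ)
    (hpdef : ∀ i ∈ Finset.Icc 1 (k - 1), p i = α i - α (i + 1))
    (hqdef : ∀ i ∈ Finset.Icc 1 (k - 1), q i = β i - β (i + 1))
    (hrdef : ∀ i ∈ Finset.Icc 1 (k - 1), r i = γ i - γ (i + 1))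
    (hp0 : p 0 = 0) (hq0 : q 0 = 0) (hr0 : r 0 = 0)
    (hpk : p k = 0) (hqk : q k = 0) (hrk : r k = 0)
    (τ : ℝ) (hτ : 0 ≤ τ) (ε σ : ℝ) (M : ℝ)
    (hMb : ∀ j ≤ k, M ≥ |p j * ε + q j * σ - r j|)
    (hMr : ∀ i ∈ Finset.Icc 1 k, M ≥ |α i * ε + β i * σ - γ i| - τ) :
    (∃ i ∈ Finset.Icc 1 k,
      p (i - 1) * ε + q (i - 1) * σ ≥ r (i - 1) ∧
      p i * ε + q i * σ ≤ r i ∧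
      |α i * ε + β i * σ - γ i| ≤ τ) ↔
    (∃ s : ℕ → ℝ,
      (∀ j ∈ Finset.Icc 1 (k - 1), s j = 0 ∨ s j = 1) ∧
      (∀ j, 1 ≤ j → j + 1 ≤ k - 1 → s (j + 1) ≤ s j) ∧
      (∀ i ∈ Finset.Icc 1 k,
        p (i - 1) * ε + q (i - 1) * σ ≥
          r (i - 1) - M * ((i - 1 : ℝ) - (∑ j ∈ Finset.Icc 1 (i - 1), s j)
            + (∑ j ∈ Finset.Icc i (k - 1), s j)) ∧
        p i * ε + q i * σ ≤
          r i + M * ((i - 1 : ℝ) - (∑ j ∈ Finset.Icc 1 (i - 1), s j)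
            + (∑ j ∈ Finset.Icc i (k - 1), s j)) ∧
        |α i * ε + β i * σ - γ i| ≤
          τ + M * ((i - 1 : ℝ) - (∑ j ∈ Finset.Icc 1 (i - 1), s j)
            + (∑ j ∈ Finset.Icc i (k - 1), s j)))) := by
  have hM : 0 ≤ M := (abs_nonneg _).trans (hMb 0 k.zero_le)
  have hPM (i : ℕ) (hi : i ∈ Icc 1 k) : RelaxedPiece α β γ p q r τ ε σ i M :=
    have hik : i ≤ k := (mem_Icc.mp hi).2
    relaxedPiece_of_abs_le (hMb (i - 1) (i.pred_le.trans hik)) (hMb i hik) (hMr i hi)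
  have key := bigM_general_pieces_general (one_le_two.trans hk)
    (fun _ => monotone_relaxedPiece) hM hPM
  simp only [relaxedPiece_zero_iff] at key
  exact key.trans ⟨fun ⟨s, hs, h⟩ => ⟨s, hs.eq_zero_or_eq_one, hs.succ_le, h⟩,
    fun ⟨s, hbinary, hordered, h⟩ => ⟨s, ⟨hbinary, hordered⟩, h⟩⟩
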